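/- arXiv:2205.12738 — 2 statements merged into one kernel-verified Lean document; each statement's English description precedes it below -/
import Mathlib

section
/- Let q be a prime power, δ ∈ (0,1], and let m = m(n) be a sequence of positive integers with n ≤ m(n) for all n. Then lim_{n→∞} (1/(n·m(n)))·log_q V_C(n, m(n), q, ⌊δ·n⌋) = δ. Consequently the asymptotic Gilbert–Varshamov bound liminf_{n→∞} R(n, m(n), ⌊δn⌋, q) ≥ 1 − δ holds, where R(n,m,d,q) = (1/(nm))·log_q A(q,m,n,d). -/
/-- A cover of a matrix `A` is a set of lines (rows, encoded as `Sum.inl`, and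
columns, encoded as `Sum.inr`) such that every nonzero entry of `A` lies in one
of these lines. -/
def IsCover {F : Type*} [Field F] {m n : ℕ} (A : Matrix (Fin m) (Fin n) F)
    (S : Finset (Fin m ⊕ Fin n)) : Prop :=
  ∀ i j, A i j ≠ 0 → Sum.inl i ∈ S ∨ Sum.inr j ∈ S

/-- The cover weight of a matrix: the minimum cardinality of a cover. -/
noncomputable def coverWt {F : Type*} [Field F] {m n : ℕ}
    (A : Matrix (Fin m) (Fin n) F) : ℕ :=
  sInf {c | ∃ S : Finset (Fin m ⊕ Fin n), IsCover A S ∧ S.card = c}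

/-- `maxCode F m n d` is `A(q,m,n,d)`: the largest size of a subset of
`F_q^{m×n}` in which any two distinct elements have cover distance at least `d`. -/
noncomputable def maxCode (F : Type*) [Field F] [Fintype F] (m n d : ℕ) : ℕ :=
  sSup {c | ∃ S : Finset (Matrix (Fin m) (Fin n) F),
    (∀ A ∈ S, ∀ B ∈ S, A ≠ B → d ≤ coverWt (A - B)) ∧ S.card = c}

section CoverMetric

variable {F : Type*} [Field F] {m n : ℕ}

lemma exists_isCover_card_eq_coverWt (A : Matrix (Fin m) (Fin n) F) :
    ∃ S : Finset (Fin m ⊕ Fin n), IsCover A S ∧ S.card = coverWt A :=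
  Nat.sInf_mem (s := {c | ∃ S : Finset (Fin m ⊕ Fin n), IsCover A S ∧ S.card = c})
    ⟨_, Finset.univ, fun _ _ _ => Or.inl (Finset.mem_univ _), rfl⟩

lemma IsCover.coverWt_le {A : Matrix (Fin m) (Fin n) F} {S : Finset (Fin m ⊕ Fin n)}
    (h : IsCover A S) : coverWt A ≤ S.card :=
  Nat.sInf_le ⟨S, h, rfl⟩

lemma coverWt_zero : coverWt (0 : Matrix (Fin m) (Fin n) F) = 0 :=
  Nat.le_zero.mp (IsCover.coverWt_le (S := ∅) fun _ _ h => absurd rfl h)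

lemma coverWt_neg (A : Matrix (Fin m) (Fin n) F) : coverWt (-A) = coverWt A := by
  simp [coverWt, IsCover]

lemma coverWt_sub_comm (A B : Matrix (Fin m) (Fin n) F) :
    coverWt (A - B) = coverWt (B - A) := by
  rw [← coverWt_neg, neg_sub]

/-- The matrices covered by a fixed set of lines number at most `q ^ (|S| m)`, since such a matrix
is determined by its entries on the lines of `S`, each of which has length at most `m`. -/
lemma card_isCover_le [Fintype F] (hnm : n ≤ m) (S : Finset (Fin m ⊕ Fin n)) :
    Nat.card {A : Matrix (Fin m) (Fin n) F // IsCover A S} ≤ Fintype.card F ^ (S.card * m) := by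
  let restrict : {A : Matrix (Fin m) (Fin n) F // IsCover A S} → (S × Fin m → F) := fun A p =>
    Sum.elim (fun i => if h : (p.2 : ℕ) < n then A.1 i ⟨p.2, h⟩ else 0) (fun j => A.1 p.2 j) p.1.1
  have hinj : Function.Injective restrict := by
    rintro ⟨A, hA⟩ ⟨B, hB⟩ hAB
    have hAB' := congrFun hAB
    ext i j
    by_cases hr : Sum.inl i ∈ S
    · simpa [restrict] using hAB' (⟨Sum.inl i, hr⟩, Fin.castLE hnm j)
    by_cases hc : Sum.inr j ∈ S
    · simpa [restrict] using hAB' (⟨Sum.inr j, hc⟩, i)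
    have hA0 : A i j = 0 := by
      by_contra h
      exact (hA i j h).elim hr hc
    have hB0 : B i j = 0 := by
      by_contra h
      exact (hB i j h).elim hr hc
    simp [hA0, hB0]
  refine (Nat.card_le_card_of_injective restrict hinj).trans_eq ?_
  simp [Nat.card_eq_fintype_card]

lemma card_coverBall_le [Fintype F] (hnm : n ≤ m) (d : ℕ) :
    Nat.card {A : Matrix (Fin m) (Fin n) F | coverWt A ≤ d} ≤
      Fintype.card F ^ (m + n + d * m) := by
  classical
  have hq : 1 < Fintype.card F := Fintype.one_lt_card
  let P := {S : Finset (Fin m ⊕ Fin n) // S.card ≤ d}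
  let forget : (Σ S : P, {A : Matrix (Fin m) (Fin n) F // IsCover A S.1}) →
      Matrix (Fin m) (Fin n) F := fun x => x.2.1
  have hsub : {A : Matrix (Fin m) (Fin n) F | coverWt A ≤ d} ⊆ Set.range forget := by
    intro A hA
    obtain ⟨S, hS, hcard⟩ := exists_isCover_card_eq_coverWt A
    exact ⟨⟨⟨S, hcard.trans_le hA⟩, ⟨A, hS⟩⟩, rfl⟩
  calc Nat.card {A : Matrix (Fin m) (Fin n) F | coverWt A ≤ d}
      ≤ Nat.card (Set.range forget) := Nat.card_mono (Set.toFinite _) hsub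
    _ ≤ Nat.card (Σ S : P, {A : Matrix (Fin m) (Fin n) F // IsCover A S.1}) :=
        Nat.card_le_card_of_surjective _ Set.rangeFactorization_surjective
    _ = ∑ S : P, Nat.card {A : Matrix (Fin m) (Fin n) F // IsCover A S.1} := Nat.card_sigma
    _ ≤ ∑ _S : P, Fintype.card F ^ (d * m) := by
        refine Finset.sum_le_sum fun S _ => (card_isCover_le hnm S.1).trans ?_
        exact Nat.pow_le_pow_right hq.le (Nat.mul_le_mul_right m S.2)
    _ = Fintype.card P * Fintype.card F ^ (d * m) := by simp
    _ ≤ Fintype.card F ^ (m + n) * Fintype.card F ^ (d * m) := by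
        refine Nat.mul_le_mul_right _ ((Fintype.card_subtype_le _).trans ?_)
        simpa using Nat.pow_le_pow_left hq (m + n)
    _ = Fintype.card F ^ (m + n + d * m) := (pow_add _ _ _).symm

lemma pow_le_card_coverBall [Fintype F] {d : ℕ} (hd : d ≤ n) :
    Fintype.card F ^ (d * m) ≤ Nat.card {A : Matrix (Fin m) (Fin n) F | coverWt A ≤ d} := by
  classical
  let extend : (Fin d × Fin m → F) → Matrix (Fin m) (Fin n) F := fun B i j =>
    if h : (j : ℕ) < d then B (⟨j, h⟩, i) else 0
  have hext (B) : coverWt (extend B) ≤ d := by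
    refine (IsCover.coverWt_le (S := Finset.univ.image fun k : Fin d => Sum.inr (Fin.castLE hd k))
      fun i j hij => Or.inr ?_).trans (Finset.card_image_le.trans_eq (Finset.card_fin d))
    have hj : (j : ℕ) < d := by
      by_contra h
      exact hij (dif_neg h)
    exact Finset.mem_image.mpr ⟨⟨j, hj⟩, Finset.mem_univ _, rfl⟩
  have hinj : Function.Injective
      fun B => (⟨extend B, hext B⟩ : {A : Matrix (Fin m) (Fin n) F | coverWt A ≤ d}) := by
    intro B C hBC
    funext ⟨k, i⟩
    have h := congrFun (congrFun (congrArg Subtype.val hBC) i) (Fin.castLE hd k)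
    simpa [extend] using h
  refine Eq.trans_le ?_ (Nat.card_le_card_of_injective _ hinj)
  simp [Nat.card_eq_fintype_card]

lemma bddAbove_codeSizes [Fintype F] (d : ℕ) :
    BddAbove {c | ∃ S : Finset (Matrix (Fin m) (Fin n) F),
      (∀ A ∈ S, ∀ B ∈ S, A ≠ B → d ≤ coverWt (A - B)) ∧ S.card = c} := by
  classical
  refine ⟨Fintype.card (Matrix (Fin m) (Fin n) F), ?_⟩
  rintro _ ⟨S, -, rfl⟩
  exact S.card_le_univ

lemma exists_code_card_eq_maxCode [Fintype F] (d : ℕ) :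
    ∃ S : Finset (Matrix (Fin m) (Fin n) F),
      (∀ A ∈ S, ∀ B ∈ S, A ≠ B → d ≤ coverWt (A - B)) ∧ S.card = maxCode F m n d :=
  Nat.sSup_mem (s := {c | ∃ S : Finset (Matrix (Fin m) (Fin n) F),
    (∀ A ∈ S, ∀ B ∈ S, A ≠ B → d ≤ coverWt (A - B)) ∧ S.card = c})
    ⟨0, ∅, by simp, rfl⟩ (bddAbove_codeSizes d)

lemma card_matrix_fin (F : Type*) [Fintype F] (m n : ℕ) :
    Nat.card (Matrix (Fin m) (Fin n) F) = Fintype.card F ^ (n * m) := by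
  simp [Matrix, Nat.card_eq_fintype_card, pow_mul]

lemma maxCode_le [Fintype F] (d : ℕ) : maxCode F m n d ≤ Fintype.card F ^ (n * m) := by
  classical
  obtain ⟨S, -, hS⟩ := exists_code_card_eq_maxCode (F := F) (m := m) (n := n) d
  rw [← hS, ← card_matrix_fin, Nat.card_eq_fintype_card]
  exact S.card_le_univ

/-- The Gilbert–Varshamov inequality: the balls of radius `d` around the words of a maximal code
cover the whole space. -/
lemma pow_le_maxCode_mul_card_coverBall [Fintype F] (d : ℕ) :
    Fintype.card F ^ (n * m) ≤
      maxCode F m n d * Nat.card {A : Matrix (Fin m) (Fin n) F | coverWt A ≤ d} := by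
  classical
  obtain ⟨S, hcode, hS⟩ := exists_code_card_eq_maxCode (F := F) (m := m) (n := n) d
  have hcov (B : Matrix (Fin m) (Fin n) F) : ∃ A ∈ S, coverWt (B - A) ≤ d := by
    by_contra! hfar
    have hB : B ∉ S := fun h => by simpa [coverWt_zero] using hfar B h
    have hins : (insert B S).card ≤ maxCode F m n d := by
      refine le_csSup (bddAbove_codeSizes d) ⟨insert B S, fun X hX Y hY hXY => ?_, rfl⟩
      rcases Finset.mem_insert.mp hX with rfl | hXS <;>
        rcases Finset.mem_insert.mp hY with rfl | hYS
      · exact absurd rfl hXY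
      · exact (hfar Y hYS).le
      · exact coverWt_sub_comm X Y ▸ (hfar X hXS).le
      · exact hcode X hXS Y hYS hXY
    rw [Finset.card_insert_of_notMem hB] at hins
    omega
  have hsurj : Function.Surjective
      fun p : S × {A : Matrix (Fin m) (Fin n) F | coverWt A ≤ d} => p.1.1 + p.2.1 := by
    intro B
    obtain ⟨A, hA, hAB⟩ := hcov B
    exact ⟨(⟨A, hA⟩, ⟨B - A, hAB⟩), add_sub_cancel A B⟩
  have hcard := Nat.card_le_card_of_surjective _ hsurj
  rwa [card_matrix_fin, Nat.card_prod, Nat.card_eq_fintype_card, Fintype.card_coe, hS] at hcard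

end CoverMetric

lemma tendsto_logb_card_coverBall {F : Type*} [Field F] [Fintype F] {δ : ℝ} (hδ0 : 0 < δ)
    (hδ1 : δ ≤ 1) (m : ℕ → ℕ) (hm : ∀ n, n ≤ m n) :
    Filter.Tendsto
      (fun n : ℕ => (1 / ((n : ℝ) * m n)) *
        Real.logb (Fintype.card F)
          (Nat.card {A : Matrix (Fin (m n)) (Fin n) F | coverWt A ≤ ⌊δ * n⌋₊}))
      Filter.atTop (nhds δ) := by
  have hq : (1 : ℝ) < Fintype.card F := by exact_mod_cast Fintype.one_lt_card
  have hfloor : Filter.Tendsto (fun n : ℕ => (⌊δ * n⌋₊ : ℝ) / n) Filter.atTop (nhds δ) :=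
    (tendsto_nat_floor_mul_div_atTop hδ0.le).comp tendsto_natCast_atTop_atTop
  have hupper : Filter.Tendsto (fun n : ℕ => (2 : ℝ) / n + (⌊δ * n⌋₊ : ℝ) / n)
      Filter.atTop (nhds δ) := by
    simpa using (tendsto_const_div_atTop_nhds_zero_nat (2 : ℝ)).add hfloor
  refine tendsto_of_tendsto_of_tendsto_of_le_of_le' hfloor hupper ?_ ?_ <;>
    filter_upwards [Filter.eventually_gt_atTop 0] with n hn <;>
    have hn' : (0 : ℝ) < n := by exact_mod_cast hn
  all_goals
    have hm' : (n : ℝ) ≤ m n := by exact_mod_cast hm n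
    have hmpos : (0 : ℝ) < m n := hn'.trans_le hm'
    have hd : ⌊δ * n⌋₊ ≤ n := Nat.floor_le_of_le (by nlinarith)
    have hlow := pow_le_card_coverBall (F := F) (m := m n) hd
    have hpos : 0 < Nat.card {A : Matrix (Fin (m n)) (Fin n) F | coverWt A ≤ ⌊δ * n⌋₊} :=
      (pow_pos Fintype.card_pos _).trans_le hlow
  · have hlog : ((⌊δ * n⌋₊ * m n : ℕ) : ℝ) ≤ Real.logb (Fintype.card F)
        (Nat.card {A : Matrix (Fin (m n)) (Fin n) F | coverWt A ≤ ⌊δ * n⌋₊}) := by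
      rw [Real.le_logb_iff_rpow_le hq (by exact_mod_cast hpos), Real.rpow_natCast]
      exact_mod_cast hlow
    calc (⌊δ * n⌋₊ : ℝ) / n = 1 / (n * m n) * ((⌊δ * n⌋₊ * m n : ℕ) : ℝ) := by
          push_cast
          field_simp
      _ ≤ _ := by gcongr
  · have hlog : Real.logb (Fintype.card F)
        (Nat.card {A : Matrix (Fin (m n)) (Fin n) F | coverWt A ≤ ⌊δ * n⌋₊}) ≤
        ((m n + n + ⌊δ * n⌋₊ * m n : ℕ) : ℝ) := by
      rw [Real.logb_le_iff_le_rpow hq (by exact_mod_cast hpos), Real.rpow_natCast]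
      exact_mod_cast card_coverBall_le (hm n) _
    calc _ ≤ 1 / (n * m n) * ((m n + n + ⌊δ * n⌋₊ * m n : ℕ) : ℝ) := by gcongr
      _ ≤ 1 / (n * m n) * (m n + m n + ⌊δ * n⌋₊ * m n) := by
          push_cast
          gcongr
      _ = 2 / n + (⌊δ * n⌋₊ : ℝ) / n := by
          field_simp
          ring

/-- Asymptotics of the cover-ball size, `(1/(nm))·log_q V_C(n,m,q,⌊δn⌋) → δ`,
and the asymptotic Gilbert–Varshamov bound
`liminf_{n→∞} R(n, m(n), ⌊δn⌋, q) ≥ 1 − δ`, where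
`R(n,m,d,q) = (1/(nm))·log_q A(q,m,n,d)`. -/
theorem asymptotic_gilbert_varshamov {F : Type*} [Field F] [Fintype F] {q : ℕ}
    (hq : Fintype.card F = q) (δ : ℝ) (hδ0 : 0 < δ) (hδ1 : δ ≤ 1)
    (m : ℕ → ℕ) (hm : ∀ n, n ≤ m n) :
    Filter.Tendsto
      (fun n : ℕ => (1 / ((n : ℝ) * m n)) *
        Real.logb q
          (Nat.card {A : Matrix (Fin (m n)) (Fin n) F | coverWt A ≤ ⌊δ * n⌋₊}))
      Filter.atTop (nhds δ) ∧
    (1 - δ) ≤ Filter.liminf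
      (fun n : ℕ => (1 / ((n : ℝ) * m n)) *
        Real.logb q (maxCode F (m n) n ⌊δ * n⌋₊))
      Filter.atTop := by
  subst hq
  have hball := tendsto_logb_card_coverBall (F := F) hδ0 hδ1 m hm
  refine ⟨hball, ?_⟩
  have hq : (1 : ℝ) < Fintype.card F := by exact_mod_cast Fintype.one_lt_card
  have hGV := hball.const_sub 1
  have hcode : ∀ n, 0 < maxCode F (m n) n ⌊δ * n⌋₊ := fun n =>
    Nat.pos_of_mul_pos_right ((pow_pos Fintype.card_pos _).trans_le
      (pow_le_maxCode_mul_card_coverBall (F := F) (m := m n) (n := n) ⌊δ * n⌋₊))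
  rw [← hGV.liminf_eq]
  refine Filter.liminf_le_liminf ?_ hGV.isBoundedUnder_ge
    (Filter.IsBoundedUnder.isCoboundedUnder_ge ⟨1, ?_⟩)
  · filter_upwards [Filter.eventually_gt_atTop 0] with n hn
    have hn' : (0 : ℝ) < n := by exact_mod_cast hn
    have hmpos : (0 : ℝ) < m n := hn'.trans_le (by exact_mod_cast hm n)
    have hprod := pow_le_maxCode_mul_card_coverBall (F := F) (m := m n) (n := n) ⌊δ * n⌋₊
    have hV : 0 < Nat.card {A : Matrix (Fin (m n)) (Fin n) F | coverWt A ≤ ⌊δ * n⌋₊} :=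
      Nat.pos_of_mul_pos_left ((pow_pos Fintype.card_pos _).trans_le hprod)
    have hA := hcode n
    have hlog : ((n * m n : ℕ) : ℝ) ≤ Real.logb (Fintype.card F) (maxCode F (m n) n ⌊δ * n⌋₊) +
        Real.logb (Fintype.card F)
          (Nat.card {A : Matrix (Fin (m n)) (Fin n) F | coverWt A ≤ ⌊δ * n⌋₊}) := by
      rw [← Real.logb_mul (by positivity) (by exact_mod_cast hV.ne'),
        Real.le_logb_iff_rpow_le hq (by exact_mod_cast Nat.mul_pos hA hV), Real.rpow_natCast]
      exact_mod_cast hprod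
    have hone : (1 : ℝ) = 1 / (n * m n) * ((n * m n : ℕ) : ℝ) := by
      push_cast
      field_simp
    rw [sub_le_iff_le_add, ← mul_add]
    refine hone.trans_le ?_
    gcongr
  · refine Filter.eventually_map.mpr (Filter.Eventually.of_forall fun n => ?_)
    have hlog : Real.logb (Fintype.card F) (maxCode F (m n) n ⌊δ * n⌋₊) ≤ (n : ℝ) * m n := by
      rw [← Nat.cast_mul, Real.logb_le_iff_le_rpow hq (by exact_mod_cast hcode n),
        Real.rpow_natCast]
      exact_mod_cast maxCode_le _
    rw [one_div_mul_eq_div]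
    exact div_le_one_of_le₀ hlog (by positivity)
end

section
/- (Correctness of the reduction proving NP-completeness of the Lowest Cover Weight Codeword Problem) Let G ∈ F_q^{k×n} with rows g_1, …, g_k, let t ≤ n be a positive integer, and for each i define G_i ∈ F_q^{(t+1)×n} as the matrix obtained by stacking the row g_i exactly t+1 times. Then there exists a nonzero x ∈ F_q^k with Hamming weight wt_H(xG) ≤ t if and only if there exists a nonzero u ∈ F_q^k with cover weight wt_C(u_1 G_1 + ⋯ + u_k G_k) ≤ t. -/
theorem coverWt_le_iff {F : Type*} [Field F] {m n : ℕ} (A : Matrix (Fin m) (Fin n) F) (t : ℕ) :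
    coverWt A ≤ t ↔ ∃ S : Finset (Fin m ⊕ Fin n), IsCover A S ∧ S.card ≤ t := by
  constructor
  · intro h
    have hne : {c | ∃ S : Finset (Fin m ⊕ Fin n), IsCover A S ∧ S.card = c}.Nonempty :=
      ⟨_, Finset.univ, fun i j _ => Or.inl (Finset.mem_univ _), rfl⟩
    obtain ⟨S, hS, hc⟩ := Nat.sInf_mem hne
    exact ⟨S, hS, hc.trans_le h⟩
  · rintro ⟨S, hS, hc⟩
    exact le_trans (Nat.sInf_le (by exact ⟨S, hS, rfl⟩)) hc

/-- A matrix with more than `t` rows, all equal to `v`, has cover weight at most `t` iff `v` has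
Hamming weight at most `t`. -/
theorem coverWt_const_rows_le_iff {F : Type*} [Field F] [DecidableEq F] {m n t : ℕ} (hm : t < m)
    (v : Fin n → F) :
    coverWt (Matrix.of fun _ : Fin m => v) ≤ t ↔ hammingNorm v ≤ t := by
  rw [coverWt_le_iff]
  constructor
  · rintro ⟨S, hS, hc⟩
    obtain ⟨i, hi⟩ : ∃ i : Fin m, Sum.inl i ∉ S := by
      by_contra! h
      have hle : (Finset.univ.map (Function.Embedding.inl : Fin m ↪ Fin m ⊕ Fin n)).card ≤
          S.card := by
        refine Finset.card_le_card fun x hx => ?_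
        obtain ⟨i, -, rfl⟩ := Finset.mem_map.1 hx
        exact h i
      rw [Finset.card_map, Finset.card_univ, Fintype.card_fin] at hle
      omega
    refine le_trans ?_ hc
    refine Finset.card_le_card_of_injOn Sum.inr (fun j hj => ?_) Sum.inr_injective.injOn
    exact (hS i j (by simpa using hj)).resolve_left hi
  · intro h
    refine ⟨(Finset.univ.filter fun j => v j ≠ 0).map Function.Embedding.inr, ?_, ?_⟩
    · intro i j hij
      exact Or.inr (Finset.mem_map_of_mem _ (by simpa using hij))
    · rwa [Finset.card_map]

open Matrix in
/-- Correctness of the reduction from the Lowest Hamming Weight Codeword Problem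
to the Lowest Cover Weight Codeword Problem: with `G_i ∈ F_q^{(t+1)×n}` obtained
by stacking the `i`-th row `g_i` of `G` exactly `t+1` times, there is a nonzero
`x` with `wt_H(xG) ≤ t` iff there is a nonzero `u` with
`wt_C(u_1 G_1 + ⋯ + u_k G_k) ≤ t`. -/
theorem lowest_cover_weight_reduction {F : Type*} [Field F] [Fintype F]
    [DecidableEq F] {q k n t : ℕ} (hq : Fintype.card F = q)
    (G : Matrix (Fin k) (Fin n) F) (ht : 0 < t) (htn : t ≤ n) :
    (∃ x : Fin k → F, x ≠ 0 ∧ hammingNorm (x ᵥ* G) ≤ t) ↔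
    (∃ u : Fin k → F, u ≠ 0 ∧
      coverWt (∑ i, u i • (Matrix.of fun _ : Fin (t + 1) => G i)) ≤ t) := by
  have hsum (u : Fin k → F) : (∑ i, u i • (Matrix.of fun _ : Fin (t + 1) => G i)) =
      Matrix.of fun _ : Fin (t + 1) => u ᵥ* G := by
    ext i j
    simp [Matrix.sum_apply, Matrix.vecMul, dotProduct]
  simp only [hsum, coverWt_const_rows_le_iff (Nat.lt_succ_self t)]
end
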